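/- In the Gaussian sequence model, for every q ≥ 1 there exists a constant C_q > 0 depending only on q such that for all σ > 0, a > 0 and integers s, p with 1 ≤ s < p/2 and s ≥ 8q log log p: inf over measurable estimators β̂ : ℝ^p → ℝ^p of sup_{β ∈ Ω^p_{s,a}} E_β‖β̂(Y) − β‖_q^q ≥ C_q Φ(a). -/

import Mathlib

/-!
The lower bound is Bayesian, with a prior that makes all blocks of coordinates independent.

Cut `s * m` coordinates into `s` blocks of `m = ⌊p/s⌋`. Each block is, independently, empty with
probability `1/2`, or carries a single spike of height `a` at a uniform position. Such vectors are
`s`-sparse. Fix a block and condition on the others. Since the `ℓ_q` loss is a sum over coordinates,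
the empty state is charged at every position `j` of the block, while the spike at `j` is charged
only at `j`. Hence the risk of the block is at least the sum over `j` of two-point risks comparing
`N(0, σ²)` with weight `1/2` to `N(a, σ²)` with weight `1/(2m)`. By the Neyman–Pearson lemma
(`two_point_line`, lifted to one coordinate of the model in `two_point_coord`), each of them is at
least `(a/2)^q / (2m)` times `∫ min(m φ_0, φ_a)`. As `m ≥ p/s - 1`, this integral is at least
`(p/s - 1) P(σε > t(a)) + P(σε > a - t(a)) = ψ / s`. Summing over positions and blocks gives the risk
bound `(a/2)^q ψ / 2` for every `a > 0` (`psi_bound`).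

The same argument with blocks of one coordinate and the values `a` and `a + σ` gives a bound of
order `s σ^q` (`noise_bound`), which handles the term `σ_q^q s`. Both are instances of `block_bound`.

For `a < t*`, the minimax risk is nonincreasing in `a`, so `psi_bound` at `t*` applies. There
`t(t*) = t*`, hence `ψ(t*) ≥ s P(σε > 0)`, and `t*^q ψ(t*)` is of the order of `s t*^q`.

The prior is supported on vectors with at most one spike per block, not on random subsets of
binomial size, so no large-deviation term for the sparsity appears.
-/

open MeasureTheory ProbabilityTheory Filter
open scoped ENNReal NNReal BigOperators Classical

noncomputable section

/-- The Gaussian distribution `N(m, σ²)` on `ℝ`. -/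
def gauss (m σ : ℝ) : Measure ℝ := gaussianReal m ⟨σ ^ 2, sq_nonneg σ⟩

/-- The standard Gaussian distribution on `ℝ`. -/
def stdG : Measure ℝ := gaussianReal 0 1

/-- The Gaussian sequence model: `Y` has independent coordinates `Y j ~ N(β j, σ²)`. -/
def seqModel (p : ℕ) (σ : ℝ) (β : Fin p → ℝ) : Measure (Fin p → ℝ) :=
  Measure.pi fun j => gauss (β j) σ

/-- `Ω^p_{s,a}`: `s`-sparse vectors with nonzero coordinates at least `a` in absolute value. -/
def sparseSet (p s : ℕ) (a : ℝ) : Set (Fin p → ℝ) :=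
  {β | (Finset.univ.filter fun i => β i ≠ 0).card ≤ s ∧ ∀ i, β i ≠ 0 → a ≤ |β i|}

/-- The risk `E_β ‖est(Y) − β‖_q^q` in the Gaussian sequence model. -/
def seqRisk (p : ℕ) (σ q : ℝ) (est : (Fin p → ℝ) → Fin p → ℝ) (β : Fin p → ℝ) : ℝ≥0∞ :=
  ∫⁻ y, ENNReal.ofReal (∑ j, |est y j - β j| ^ q) ∂(seqModel p σ β)

/-- The maximal risk over `Ω^p_{s,a}`. -/
def maxRisk (p s : ℕ) (σ q a : ℝ) (est : (Fin p → ℝ) → Fin p → ℝ) : ℝ≥0∞ :=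
  ⨆ β ∈ sparseSet p s a, seqRisk p σ q est β

/-- The minimax risk over `Ω^p_{s,a}` in the Gaussian sequence model. -/
def minimax (p s : ℕ) (σ q a : ℝ) : ℝ≥0∞ :=
  ⨅ (est : (Fin p → ℝ) → Fin p → ℝ) (_ : Measurable est), maxRisk p s σ q a est

/-- `σ_q^q = E|η|^q` where `η ~ N(0, σ²)`. -/
def sigmaqq (σ q : ℝ) : ℝ := ∫ x, |x| ^ q ∂(gauss 0 σ)

/-- `P(σ ε > t)` for a standard Gaussian `ε`. -/
def PgtS (σ t : ℝ) : ℝ := (stdG {x | t < σ * x}).toReal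

/-- `P(σ ε ≥ t)` for a standard Gaussian `ε`. -/
def PgeS (σ t : ℝ) : ℝ := (stdG {x | t ≤ σ * x}).toReal

/-- The threshold `t(a) = a/2 + σ² log(p/s − 1)/a`. -/
def tFun (p s : ℕ) (σ a : ℝ) : ℝ := a / 2 + σ ^ 2 * Real.log ((p : ℝ) / s - 1) / a

/-- `t* = σ √(2 log(p/s − 1))`. -/
def tStar (p s : ℕ) (σ : ℝ) : ℝ := σ * Real.sqrt (2 * Real.log ((p : ℝ) / s - 1))

/-- `ψ(p,s,a,σ) = (p−s) P(σε > t(a)) + s P(σε > a − t(a))`. -/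
def psi (p s : ℕ) (σ a : ℝ) : ℝ :=
  ((p : ℝ) - s) * PgtS σ (tFun p s σ a) + s * PgtS σ (a - tFun p s σ a)

/-- `ψ₊(p,s,a,σ) = (p−s) P(σε > t(a)) + s P(σε > (a − t(a))₊)`. -/
def psiPlus (p s : ℕ) (σ a : ℝ) : ℝ :=
  ((p : ℝ) - s) * PgtS σ (tFun p s σ a) + s * PgtS σ (max (a - tFun p s σ a) 0)

/-- The hard-thresholding estimator at level `τ`. -/
def hardThr (p : ℕ) (τ : ℝ) : (Fin p → ℝ) → Fin p → ℝ :=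
  fun y j => if τ ≤ |y j| then y j else 0

/-- The rate `Φ(a)` from the paper. -/
def Phi (p s : ℕ) (σ q a : ℝ) : ℝ :=
  if tStar p s σ ≤ a then max (a ^ q * psi p s σ a) (sigmaqq σ q * s)
  else s * σ ^ q * (2 * Real.log ((p : ℝ) / s - 1)) ^ (q / 2)

/-! ### Gaussian measures on the line and the two-point bound -/

/-- The variance `σ²` as a nonnegative real. -/
def varNN (σ : ℝ) : ℝ≥0 := NNReal.mk (σ ^ 2) (sq_nonneg σ)

lemma gauss_eq (m σ : ℝ) : gauss m σ = gaussianReal m (varNN σ) := rfl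

lemma coe_varNN (σ : ℝ) : (varNN σ : ℝ) = σ ^ 2 := rfl

lemma varNN_ne {σ : ℝ} (hσ : 0 < σ) : varNN σ ≠ 0 := by
  intro h
  have h2 : σ ^ 2 = 0 := by rw [← coe_varNN, h]; rfl
  exact hσ.ne' (by simpa using h2)

instance (m σ : ℝ) : IsProbabilityMeasure (gauss m σ) := by
  rw [gauss_eq]; infer_instance

instance : IsProbabilityMeasure stdG := by
  unfold stdG; infer_instance

lemma stdG_map_affine (m σ : ℝ) : stdG.map (fun x => m + σ * x) = gauss m σ := by
  have h1 : stdG.map (fun x => σ * x) = gauss 0 σ := by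
    rw [stdG, gaussianReal_map_const_mul, gauss_eq]
    simp [varNN]
  have h2 : (gauss 0 σ).map (fun x => m + x) = gauss m σ := by
    rw [gauss_eq, gaussianReal_map_const_add, gauss_eq]
    simp
  rw [← h2, ← h1, Measure.map_map (by fun_prop) (by fun_prop)]
  rfl

lemma stdG_map_neg : stdG.map (fun x => -x) = stdG := by
  unfold stdG
  rw [gaussianReal_map_neg]
  simp

lemma gauss_Ioi (u t σ : ℝ) : gauss u σ (Set.Ioi (u + t)) = ENNReal.ofReal (PgtS σ t) := by
  rw [PgtS, ENNReal.ofReal_toReal (measure_ne_top _ _), ← stdG_map_affine,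
    Measure.map_apply (by fun_prop) measurableSet_Ioi]
  congr 1
  ext x
  simp

lemma gauss_Iio (v t σ : ℝ) : gauss v σ (Set.Iio (v - t)) = ENNReal.ofReal (PgtS σ t) := by
  rw [PgtS, ENNReal.ofReal_toReal (measure_ne_top _ _), ← stdG_map_affine]
  nth_rewrite 1 [← stdG_map_neg]
  rw [Measure.map_map (by fun_prop) (by fun_prop),
    Measure.map_apply (by fun_prop) measurableSet_Iio]
  congr 1
  ext x
  simp only [Set.mem_preimage, Function.comp_apply, Set.mem_Iio, Set.mem_ofPred_eq]
  constructor <;> intro h <;> linarith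

/-- At the point `x = u + z`, the weighted density `κ · φ_u` is at most the density `φ_{u+δ}`
exactly when `z` is at least the threshold `δ/2 + σ² log κ / δ`. -/
lemma weighted_pdf_le_iff {σ δ κ : ℝ} (u x : ℝ) (hσ : 0 < σ) (hδ : 0 < δ) (hκ : 0 < κ) :
    ENNReal.ofReal κ * gaussianPDF u (varNN σ) x
        ≤ gaussianPDF (u + δ) (varNN σ) x ↔
      u + (δ / 2 + σ ^ 2 * Real.log κ / δ) ≤ x := by
  rw [gaussianPDF, gaussianPDF, ← ENNReal.ofReal_mul hκ.le,
    ENNReal.ofReal_le_ofReal_iff (gaussianPDFReal_nonneg _ _ _)]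
  simp only [gaussianPDFReal, coe_varNN]
  rw [mul_left_comm, mul_le_mul_iff_right₀ (by positivity)]
  nth_rewrite 1 [← Real.exp_log hκ]
  rw [← Real.exp_add, Real.exp_le_exp]
  have key : (-(x - (u + δ)) ^ 2 / (2 * σ ^ 2)) - (Real.log κ + -(x - u) ^ 2 / (2 * σ ^ 2))
      = (δ / σ ^ 2) * (x - (u + (δ / 2 + σ ^ 2 * Real.log κ / δ))) := by
    field_simp
    ring
  rw [← sub_nonneg, key, mul_nonneg_iff_of_pos_left (by positivity), sub_nonneg]

/-- Weighted sum of the two error probabilities of the likelihood ratio test between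
`N(u, σ²)` (with weight `κ`) and `N(u + δ, σ²)`. -/
def testErr (σ δ κ : ℝ) : ℝ :=
  κ * PgtS σ (δ / 2 + σ ^ 2 * Real.log κ / δ)
    + PgtS σ (δ - (δ / 2 + σ ^ 2 * Real.log κ / δ))

lemma PgtS_nonneg (σ t : ℝ) : 0 ≤ PgtS σ t := ENNReal.toReal_nonneg

lemma testErr_nonneg (σ δ : ℝ) {κ : ℝ} (hκ : 0 < κ) : 0 ≤ testErr σ δ κ :=
  add_nonneg (mul_nonneg hκ.le (PgtS_nonneg _ _)) (PgtS_nonneg _ _)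

/-- Whatever the estimate `z`, it is at distance at least `δ/2` from `u` or from `u + δ`. -/
lemma half_rpow_le {q δ : ℝ} (hq : 1 ≤ q) (hδ : 0 < δ) (u z : ℝ) :
    ENNReal.ofReal ((δ / 2) ^ q)
      ≤ ENNReal.ofReal (|z - u| ^ q) + ENNReal.ofReal (|z - (u + δ)| ^ q) := by
  have hq0 : 0 ≤ q := by linarith
  rcases le_total (u + δ / 2) z with h | h
  · refine le_add_right (ENNReal.ofReal_le_ofReal (Real.rpow_le_rpow (by positivity) ?_ hq0))
    exact le_trans (by linarith) (le_abs_self _)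
  · refine le_add_left (ENNReal.ofReal_le_ofReal (Real.rpow_le_rpow (by positivity) ?_ hq0))
    exact le_trans (by linarith) (neg_le_abs _)

/-- Two-point lower bound on the line, by the Neyman–Pearson lemma. -/
lemma two_point_line {q σ δ κ : ℝ} (hq : 1 ≤ q) (hσ : 0 < σ) (hδ : 0 < δ) (hκ : 0 < κ) (u : ℝ)
    (h : ℝ → ℝ) (hm : Measurable h) :
    ENNReal.ofReal ((δ / 2) ^ q * testErr σ δ κ)
      ≤ ENNReal.ofReal κ * ∫⁻ x, ENNReal.ofReal (|h x - u| ^ q) ∂(gauss u σ)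
        + ∫⁻ x, ENNReal.ofReal (|h x - (u + δ)| ^ q) ∂(gauss (u + δ) σ) := by
  set t := δ / 2 + σ ^ 2 * Real.log κ / δ with ht
  set D := ENNReal.ofReal ((δ / 2) ^ q)
  set f := gaussianPDF u (varNN σ) with hf
  set g := gaussianPDF (u + δ) (varNN σ) with hg
  have mf : Measurable f := measurable_gaussianPDF _ _
  have mg : Measurable g := measurable_gaussianPDF _ _
  have eu : gauss u σ = volume.withDensity f :=
    gaussianReal_of_var_ne_zero _ (varNN_ne hσ)
  have ev : gauss (u + δ) σ = volume.withDensity g :=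
    gaussianReal_of_var_ne_zero _ (varNN_ne hσ)
  have m1 : Measurable fun x => ENNReal.ofReal (|h x - u| ^ q) := by fun_prop
  have m2 : Measurable fun x => ENNReal.ofReal (|h x - (u + δ)| ^ q) := by fun_prop
  have hA : gauss u σ (Set.Ioi (u + t)) = ∫⁻ x, (Set.Ioi (u + t)).indicator f x := by
    rw [eu, withDensity_apply _ measurableSet_Ioi, lintegral_indicator measurableSet_Ioi]
  have hB : gauss (u + δ) σ (Set.Iio (u + t)) = ∫⁻ x, (Set.Iio (u + t)).indicator g x := by
    rw [ev, withDensity_apply _ measurableSet_Iio, lintegral_indicator measurableSet_Iio]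
  have hL : ENNReal.ofReal ((δ / 2) ^ q * testErr σ δ κ)
      = ∫⁻ x, D * (ENNReal.ofReal κ * (Set.Ioi (u + t)).indicator f x
          + (Set.Iio (u + t)).indicator g x) := by
    rw [lintegral_const_mul _ (by
        exact ((mf.indicator measurableSet_Ioi).const_mul _).add (mg.indicator measurableSet_Iio)),
      lintegral_add_left ((mf.indicator measurableSet_Ioi).const_mul _),
      lintegral_const_mul _ (mf.indicator measurableSet_Ioi), ← hA, ← hB, gauss_Ioi,
      show u + t = (u + δ) - (δ - t) by ring, gauss_Iio,
      ENNReal.ofReal_mul (by positivity), testErr,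
      ENNReal.ofReal_add (mul_nonneg hκ.le (PgtS_nonneg _ _)) (PgtS_nonneg _ _),
      ENNReal.ofReal_mul hκ.le]
  rw [hL, eu, ev, lintegral_withDensity_eq_lintegral_mul _ mf m1,
    lintegral_withDensity_eq_lintegral_mul _ mg m2, ← lintegral_const_mul _ (mf.mul m1),
    ← lintegral_add_left ((mf.mul m1).const_mul _)]
  refine lintegral_mono fun x => ?_
  have hx := half_rpow_le hq hδ u (h x)
  have hiff := weighted_pdf_le_iff u x hσ hδ hκ
  rw [← ht, ← hf, ← hg] at hiff
  simp only [Pi.mul_apply]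
  rcases lt_trichotomy x (u + t) with hlt | heq | hgt
  · have hle : g x ≤ ENNReal.ofReal κ * f x := by
      by_contra hc
      exact absurd (hiff.1 (not_le.1 hc).le) (not_le.2 hlt)
    rw [Set.indicator_of_notMem (by simp [hlt.le]), Set.indicator_of_mem (by simpa using hlt)]
    calc D * (ENNReal.ofReal κ * 0 + g x) = g x * D := by ring
      _ ≤ g x * (ENNReal.ofReal (|h x - u| ^ q) + ENNReal.ofReal (|h x - (u + δ)| ^ q)) := by gcongr
      _ = g x * ENNReal.ofReal (|h x - u| ^ q)
          + g x * ENNReal.ofReal (|h x - (u + δ)| ^ q) := by ring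
      _ ≤ _ := by rw [← mul_assoc]; gcongr
  · rw [Set.indicator_of_notMem (by simp [heq]), Set.indicator_of_notMem (by simp [heq])]
    simp
  · have hle : ENNReal.ofReal κ * f x ≤ g x := hiff.2 hgt.le
    rw [Set.indicator_of_mem (by simpa using hgt), Set.indicator_of_notMem (by simp [hgt.le])]
    calc D * (ENNReal.ofReal κ * f x + 0) = (ENNReal.ofReal κ * f x) * D := by ring
      _ ≤ (ENNReal.ofReal κ * f x)
          * (ENNReal.ofReal (|h x - u| ^ q) + ENNReal.ofReal (|h x - (u + δ)| ^ q)) := by gcongr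
      _ = ENNReal.ofReal κ * f x * ENNReal.ofReal (|h x - u| ^ q)
          + ENNReal.ofReal κ * f x * ENNReal.ofReal (|h x - (u + δ)| ^ q) := by ring
      _ ≤ _ := by rw [← mul_assoc]; gcongr

/-! ### Reduction from the sequence model to one coordinate -/

/-- Tonelli's theorem singling out coordinate `i`. -/
lemma lintegral_seqModel_split {n : ℕ} (σ : ℝ) (β : Fin (n + 1) → ℝ) (i : Fin (n + 1))
    (F : (Fin (n + 1) → ℝ) → ℝ≥0∞) (hF : Measurable F) :
    ∫⁻ y, F y ∂(seqModel (n + 1) σ β)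
      = ∫⁻ z, ∫⁻ x, F (i.insertNth (α := fun _ => ℝ) x z) ∂(gauss (β i) σ)
          ∂(seqModel n σ fun j => β (i.succAbove j)) := by
  have hmp := (measurePreserving_piFinSuccAbove (fun j => gauss (β j) σ) i).symm
  unfold seqModel
  rw [← hmp.lintegral_comp hF]
  exact lintegral_prod_symm' _ (hF.comp (MeasurableEquiv.measurable _))

/-- Two-point lower bound for the estimation of one coordinate in the sequence model, the other
coordinates of the mean being equal. -/
lemma two_point_coord {q σ δ κ : ℝ} (hq : 1 ≤ q) (hσ : 0 < σ) (hδ : 0 < δ) (hκ : 0 < κ) {p : ℕ}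
    (β β' : Fin p → ℝ) (i : Fin p) (hi : β' i = β i + δ) (hne : ∀ j, j ≠ i → β' j = β j)
    (est : (Fin p → ℝ) → Fin p → ℝ) (hm : Measurable est) :
    ENNReal.ofReal ((δ / 2) ^ q * testErr σ δ κ)
      ≤ ENNReal.ofReal κ * ∫⁻ y, ENNReal.ofReal (|est y i - β i| ^ q) ∂(seqModel p σ β)
        + ∫⁻ y, ENNReal.ofReal (|est y i - β' i| ^ q) ∂(seqModel p σ β') := by
  obtain _ | n := p
  · exact i.elim0
  have hmi : Measurable fun y => est y i := (measurable_pi_apply i).comp hm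
  have hins : Measurable fun w : ℝ × (Fin n → ℝ) => i.insertNth (α := fun _ => ℝ) w.1 w.2 :=
    (MeasurableEquiv.piFinSuccAbove (fun _ => ℝ) i).symm.measurable
  have hmeas : ∀ m : ℝ, Measurable fun z : Fin n → ℝ => ∫⁻ x,
      ENNReal.ofReal (|est (i.insertNth (α := fun _ => ℝ) x z) i - m| ^ q) ∂(gauss m σ) := by
    intro m
    have : Measurable fun w : ℝ × (Fin n → ℝ) =>
        ENNReal.ofReal (|est (i.insertNth (α := fun _ => ℝ) w.1 w.2) i - m| ^ q) := by
      have := hmi.comp hins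
      simp only [Function.comp_def] at this
      fun_prop
    exact this.lintegral_prod_left'
  have hrest : (fun j => β' (i.succAbove j)) = fun j => β (i.succAbove j) :=
    funext fun j => hne _ (Fin.succAbove_ne i j)
  rw [lintegral_seqModel_split σ β i _ (by fun_prop),
    lintegral_seqModel_split σ β' i _ (by fun_prop), hrest,
    ← lintegral_const_mul _ (hmeas _), ← lintegral_add_left ((hmeas _).const_mul _)]
  have : IsProbabilityMeasure (seqModel n σ fun j => β (i.succAbove j)) := by
    unfold seqModel; infer_instance
  calc ENNReal.ofReal ((δ / 2) ^ q * testErr σ δ κ)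
      = ∫⁻ _, ENNReal.ofReal ((δ / 2) ^ q * testErr σ δ κ)
          ∂(seqModel n σ fun j => β (i.succAbove j)) := by simp
    _ ≤ _ := by
      refine lintegral_mono fun z => ?_
      rw [hi]
      refine two_point_line hq hσ hδ hκ (β i) _ ?_
      exact hmi.comp (hins.comp (measurable_id.prodMk measurable_const))

/-! ### Uniform prior on block configurations -/

/-- Resampling block `b` of a uniform configuration leaves it uniform. -/
lemma sum_sum_update {V : Type*} [Fintype V] {s : ℕ} (b : Fin s) (F : (Fin s → V) → ℝ≥0∞) :
    ∑ f : Fin s → V, ∑ v, F (Function.update f b v) = Fintype.card V * ∑ f, F f := by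
  -- `(f, v) ↦ (update f b v, f b)` is an involution.
  let T : (Fin s → V) × V ≃ (Fin s → V) × V :=
    { toFun := fun w => (Function.update w.1 b w.2, w.1 b)
      invFun := fun w => (Function.update w.1 b w.2, w.1 b)
      left_inv := fun w => by simp
      right_inv := fun w => by simp }
  have h := Equiv.sum_comp T fun w => F w.1
  have h1 : ∀ w : (Fin s → V) × V, (T w).1 = Function.update w.1 b w.2 := fun _ => rfl
  simp only [h1] at h
  rw [Fintype.sum_prod_type, Fintype.sum_prod_type] at h
  rw [h, Finset.mul_sum]
  exact Finset.sum_congr rfl fun f _ => by simp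

/-- Averaging over a uniform product prior: if resampling block `b` costs at least `K` in
total for every configuration of the other blocks, then the worst configuration costs at least
`s K / |V|`. -/
lemma average_bound {V : Type*} [Fintype V] [Nonempty V] {s : ℕ}
    (G : Fin s → (Fin s → V) → ℝ≥0∞) (K M : ℝ≥0∞)
    (hK : ∀ b f, K ≤ ∑ v, G b (Function.update f b v)) (hM : ∀ f, ∑ b, G b f ≤ M) :
    s * K ≤ Fintype.card V * M := by
  have h1 : (Fintype.card (Fin s → V) : ℝ≥0∞) * (s * K)
      ≤ Fintype.card (Fin s → V) * (Fintype.card V * M) := by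
    calc (Fintype.card (Fin s → V) : ℝ≥0∞) * (s * K)
        = ∑ _f : Fin s → V, ∑ _b : Fin s, K := by
          simp only [Finset.sum_const, Finset.card_univ, nsmul_eq_mul, Fintype.card_fin]
      _ ≤ ∑ f : Fin s → V, ∑ b : Fin s, ∑ v, G b (Function.update f b v) :=
          Finset.sum_le_sum fun f _ => Finset.sum_le_sum fun b _ => hK b f
      _ = ∑ b : Fin s, Fintype.card V * ∑ f, G b f := by
          rw [Finset.sum_comm]
          exact Finset.sum_congr rfl fun b _ => sum_sum_update b (G b)
      _ = Fintype.card V * ∑ f, ∑ b, G b f := by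
          rw [← Finset.mul_sum, Finset.sum_comm]
      _ ≤ Fintype.card V * ∑ _f : Fin s → V, M := by gcongr with f; exact hM f
      _ = _ := by
          simp only [Finset.sum_const, Finset.card_univ, nsmul_eq_mul]
          ring
  exact (ENNReal.mul_le_mul_iff_right (by simp) (by simp)).1 h1

/-- The mean vector attached to a block configuration `f`: in block `b` all coordinates equal `u`,
except that coordinate `j` equals `v` when `f b = inl j`. Coordinates outside the blocks vanish.
The `inr` states all encode the same block, which weights it against the spikes. -/
def blockMean {s m p : ℕ} (e : Fin s × Fin m → Fin p) (u v : ℝ) (f : Fin s → Fin m ⊕ Fin m) :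
    Fin p → ℝ :=
  Function.extend e (fun w => if f w.1 = Sum.inl w.2 then v else u) 0

lemma blockMean_apply {s m p : ℕ} {e : Fin s × Fin m → Fin p} (he : Function.Injective e)
    (u v : ℝ) (f : Fin s → Fin m ⊕ Fin m) (w : Fin s × Fin m) :
    blockMean e u v f (e w) = if f w.1 = Sum.inl w.2 then v else u :=
  he.extend_apply _ _ _

lemma blockMean_inr {s m p : ℕ} (e : Fin s × Fin m → Fin p) (u v : ℝ)
    (f : Fin s → Fin m ⊕ Fin m) (b : Fin s) (k l : Fin m) :
    blockMean e u v (Function.update f b (Sum.inr k))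
      = blockMean e u v (Function.update f b (Sum.inr l)) := by
  unfold blockMean
  congr 1
  funext w
  by_cases hw : w.1 = b
  · simp [hw]
  · simp [Function.update_of_ne hw]

/-- The block means have at most one nonzero coordinate per block, either because blocks
are single coordinates or because the base value is zero. -/
lemma blockMean_mem {s m p : ℕ} {e : Fin s × Fin m → Fin p} (he : Function.Injective e)
    (hm : 1 ≤ m) {a u v : ℝ} (hu : u = 0 ∨ (m = 1 ∧ a ≤ |u|)) (hv : a ≤ |v|)
    (f : Fin s → Fin m ⊕ Fin m) : blockMean e u v f ∈ sparseSet p s a := by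
  have hrange : ∀ i, blockMean e u v f i ≠ 0 → ∃ w, e w = i := by
    intro i hi
    by_contra hc
    exact hi (Function.extend_apply' _ _ _ hc)
  constructor
  · let g : Fin s → Fin m := fun b => (f b).elim id fun _ => ⟨0, hm⟩
    have hsub : (Finset.univ.filter fun i => blockMean e u v f i ≠ 0)
        ⊆ Finset.univ.image fun b => e (b, g b) := by
      intro i hi
      have hi0 := (Finset.mem_filter.1 hi).2
      obtain ⟨⟨b, j⟩, rfl⟩ := hrange i hi0
      rw [blockMean_apply he] at hi0
      refine Finset.mem_image.2 ⟨b, Finset.mem_univ _, ?_⟩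
      rcases hu with rfl | ⟨rfl, -⟩
      · by_cases hf : f b = Sum.inl j
        · simp [g, hf]
        · simp [hf] at hi0
      · rw [Subsingleton.elim (g b) j]
    calc _ ≤ (Finset.univ.image fun b => e (b, g b)).card := by
          convert Finset.card_le_card hsub
      _ ≤ (Finset.univ : Finset (Fin s)).card := Finset.card_image_le
      _ = s := by simp
  · intro i hi
    obtain ⟨w, rfl⟩ := hrange i hi
    rw [blockMean_apply he] at hi ⊢
    split_ifs at hi ⊢ with h
    · exact hv
    · rcases hu with rfl | ⟨-, h⟩
      · exact absurd rfl hi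
      · exact h

/-- Bayesian lower bound with the uniform prior on block configurations. For each coordinate `j` of
each block, the spike at `j` (one state) is opposed to the block without spike (`m ≥ κ` states).
The latter is charged for an error at every `j`, so the `m` two-point bounds of a block add up to
`m` times the test error, out of a total prior mass of `2m` states. -/
lemma block_bound {q σ a u δ κ : ℝ} {p s m : ℕ} (hq : 1 ≤ q) (hσ : 0 < σ) (hδ : 0 < δ)
    (hκ : 0 < κ) (hκm : κ ≤ m) (hm : 1 ≤ m) (hsm : s * m ≤ p)
    (hu : u = 0 ∨ (m = 1 ∧ a ≤ |u|)) (hv : a ≤ |u + δ|) :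
    ENNReal.ofReal (s * ((δ / 2) ^ q * testErr σ δ κ) / 2) ≤ minimax p s σ q a := by
  obtain ⟨e, he⟩ : ∃ e : Fin s × Fin m → Fin p, Function.Injective e :=
    ⟨fun w => Fin.castLE hsm (finProdFinEquiv w),
      (Fin.castLE_injective hsm).comp finProdFinEquiv.injective⟩
  have : NeZero m := ⟨by lia⟩
  refine le_iInf₂ fun est hest => ?_
  set T := ENNReal.ofReal ((δ / 2) ^ q * testErr σ δ κ) with hT
  have mest : ∀ i : Fin p, Measurable fun y => est y i :=
    fun i => (measurable_pi_apply i).comp hest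
  -- risk of coordinate `j` of block `b` under configuration `f`
  let R : Fin s → Fin m → (Fin s → Fin m ⊕ Fin m) → ℝ≥0∞ := fun b j f =>
    ∫⁻ y, ENNReal.ofReal (|est y (e (b, j)) - blockMean e u (u + δ) f (e (b, j))| ^ q)
      ∂(seqModel p σ (blockMean e u (u + δ) f))
  have hM : ∀ f, ∑ b, ∑ j, R b j f ≤ maxRisk p s σ q a est := by
    intro f
    refine le_trans ?_ (le_iSup₂ (blockMean e u (u + δ) f) (blockMean_mem he hm hu hv f))
    unfold seqRisk
    simp_rw [ENNReal.ofReal_sum_of_nonneg fun i _ => Real.rpow_nonneg (abs_nonneg _) q]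
    rw [lintegral_finsetSum _ fun i _ => by have := mest i; fun_prop,
      ← Fintype.sum_prod_type' (f := fun b j => R b j f)]
    rw [← Finset.sum_image (s := Finset.univ) (g := e) (f := fun i =>
      ∫⁻ y, ENNReal.ofReal (|est y i - blockMean e u (u + δ) f i| ^ q)
        ∂(seqModel p σ (blockMean e u (u + δ) f))) he.injOn]
    exact Finset.sum_le_sum_of_subset (Finset.subset_univ _)
  have hK : ∀ b f, (m : ℝ≥0∞) * T ≤ ∑ v, ∑ j, R b j (Function.update f b v) := by
    intro b f
    rw [Finset.sum_comm]
    calc (m : ℝ≥0∞) * T = ∑ _j : Fin m, T := by simp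
      _ ≤ _ := by
        refine Finset.sum_le_sum fun j _ => ?_
        rw [Fintype.sum_sum_type]
        have h0 : ∑ k : Fin m, R b j (Function.update f b (Sum.inr k))
            = m * R b j (Function.update f b (Sum.inr j)) := by
          rw [Finset.sum_congr rfl fun k _ => show _ = R b j (Function.update f b (Sum.inr j)) by
            simp only [R]; rw [blockMean_inr e u (u + δ) f b k j]]
          simp
        have h1 : R b j (Function.update f b (Sum.inl j))
            ≤ ∑ k : Fin m, R b j (Function.update f b (Sum.inl k)) :=
          Finset.single_le_sum (f := fun k => R b j (Function.update f b (Sum.inl k)))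
            (fun _ _ => zero_le) (Finset.mem_univ j)
        have hu0 : blockMean e u (u + δ) (Function.update f b (Sum.inr j)) (e (b, j)) = u := by
          simp [blockMean_apply he]
        have hu1 : blockMean e u (u + δ) (Function.update f b (Sum.inl j)) (e (b, j))
            = u + δ := by
          simp [blockMean_apply he]
        have h2 := two_point_coord hq hσ hδ hκ
          (blockMean e u (u + δ) (Function.update f b (Sum.inr j)))
          (blockMean e u (u + δ) (Function.update f b (Sum.inl j))) (e (b, j))
          (by rw [hu0, hu1]) (fun i hi => by
            by_cases hex : ∃ w, e w = i
            · obtain ⟨⟨b', j'⟩, rfl⟩ := hex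
              rw [blockMean_apply he, blockMean_apply he]
              by_cases hb : b' = b
              · subst hb
                have : j ≠ j' := by rintro rfl; exact hi rfl
                simp [this]
              · simp [Function.update_of_ne hb]
            · unfold blockMean
              rw [Function.extend_apply' _ _ _ hex, Function.extend_apply' _ _ _ hex]) est hest
        refine h2.trans ?_
        rw [add_comm, h0]
        refine add_le_add h1 ?_
        have : ENNReal.ofReal κ ≤ m := by
          rw [← ENNReal.ofReal_natCast]; exact ENNReal.ofReal_le_ofReal hκm
        gcongr
  have key := average_bound (fun b f => ∑ j, R b j f) (m * T) (maxRisk p s σ q a est) hK hM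
  have hcard : (Fintype.card (Fin m ⊕ Fin m) : ℝ≥0∞) = m * 2 := by
    simp [mul_two]
  rw [hcard, mul_left_comm, mul_assoc,
    ENNReal.mul_le_mul_iff_right (by simpa using NeZero.ne m) (by simp)] at key
  rw [ENNReal.ofReal_div_of_pos two_pos, ENNReal.ofReal_mul (by positivity),
    ENNReal.ofReal_natCast, ENNReal.ofReal_ofNat]
  exact ENNReal.div_le_of_le_mul' key

/-! ### The two lower bounds and their combination -/

lemma minimax_anti {p s : ℕ} {σ q a a' : ℝ} (h : a ≤ a') :
    minimax p s σ q a' ≤ minimax p s σ q a := by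
  refine iInf₂_mono fun est _ => biSup_mono fun β hβ => ?_
  exact ⟨hβ.1, fun i hi => h.trans (hβ.2 i hi)⟩

/-- The constant `P(ε > 1/2)`. -/
def c0 : ℝ := PgtS 1 (1 / 2)

lemma c0_pos : 0 < c0 := by
  rw [c0, PgtS, ENNReal.toReal_pos_iff]
  refine ⟨?_, measure_lt_top _ _⟩
  refine pos_iff_ne_zero.2 fun h => ?_
  have := gaussianReal_absolutelyContinuous' 0 (one_ne_zero (α := ℝ≥0)) h
  have hs : {x : ℝ | 1 / 2 < 1 * x} = Set.Ioi (1 / 2) := by ext x; simp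
  rw [hs] at this
  simp at this

lemma c0_le_PgtS {σ t : ℝ} (hσ : 0 < σ) (ht : t ≤ σ / 2) : c0 ≤ PgtS σ t := by
  refine ENNReal.toReal_mono (measure_ne_top _ _) (measure_mono fun x hx => ?_)
  simp only [Set.mem_ofPred_eq] at hx ⊢
  nlinarith

lemma sigmaqq_eq {σ q : ℝ} (hσ : 0 < σ) :
    sigmaqq σ q = σ ^ q * ∫ x, |x| ^ q ∂stdG := by
  have h : AEStronglyMeasurable (fun x : ℝ => |x| ^ q) (stdG.map fun x => 0 + σ * x) := by
    have : Measurable fun x : ℝ => |x| ^ q := by fun_prop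
    exact this.aestronglyMeasurable
  rw [sigmaqq, ← stdG_map_affine, integral_map (by fun_prop) h, ← integral_const_mul]
  congr 1
  funext x
  rw [zero_add, abs_mul, abs_of_pos hσ, Real.mul_rpow hσ.le (abs_nonneg _)]

/-- Lower bound of order `a^q ψ(a)`: one possible spike of height `a` in each of `s` blocks of
`⌊p/s⌋` coordinates. -/
lemma psi_bound {q σ a : ℝ} {p s : ℕ} (hq : 1 ≤ q) (hσ : 0 < σ) (ha : 0 < a) (hs : 1 ≤ s)
    (hsp : (s : ℝ) < p / 2) :
    ENNReal.ofReal ((1 / 2) ^ q / 2 * (a ^ q * psi p s σ a)) ≤ minimax p s σ q a := by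
  have hs0 : (0 : ℝ) < s := by exact_mod_cast hs
  have h2 : (2 : ℝ) < p / s := by rw [lt_div_iff₀ hs0]; linarith
  have hfloor : (p : ℝ) / s - 1 ≤ ((p / s : ℕ) : ℝ) := by
    have h3 : p < s * (p / s + 1) := Nat.lt_mul_div_succ p hs
    have h4 : (p : ℝ) < s * (((p / s : ℕ) : ℝ) + 1) := by exact_mod_cast h3
    rw [sub_le_iff_le_add, div_le_iff₀ hs0]
    linarith
  have hm : 1 ≤ p / s := by
    by_contra hc
    have : p / s = 0 := by lia
    rw [this] at hfloor
    norm_num at hfloor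
    linarith
  have hb := block_bound (q := q) (σ := σ) (a := a) (u := 0) (δ := a) (κ := (p : ℝ) / s - 1)
    (p := p) (s := s) (m := p / s) hq hσ ha (by linarith) hfloor hm (Nat.mul_div_le p s)
    (Or.inl rfl) (by rw [zero_add]; exact le_abs_self a)
  refine le_trans (le_of_eq ?_) hb
  congr 1
  rw [psi, testErr, tFun, div_eq_mul_inv a 2, Real.mul_rpow ha.le (by norm_num), one_div]
  field_simp

/-- Lower bound of order `s σ^q`: on `s` coordinates the mean is either `a` or `a + σ`. -/
lemma noise_bound {q σ a : ℝ} {p s : ℕ} (hq : 1 ≤ q) (hσ : 0 < σ) (hsp : s ≤ p) :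
    ENNReal.ofReal ((1 / 2) ^ q * c0 * (s * σ ^ q)) ≤ minimax p s σ q a := by
  have hb := block_bound (q := q) (σ := σ) (a := a) (u := a) (δ := σ) (κ := 1)
    (p := p) (s := s) (m := 1) hq hσ hσ one_pos (by simp) le_rfl (by simpa using hsp)
    (Or.inr ⟨rfl, le_abs_self a⟩) (le_trans (by linarith) (le_abs_self _))
  refine le_trans (ENNReal.ofReal_le_ofReal ?_) hb
  have h1 : 2 * c0 ≤ testErr σ σ 1 := by
    have ht : σ / 2 + σ ^ 2 * Real.log 1 / σ = σ / 2 := by simp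
    have hh : σ - σ / 2 = σ / 2 := by ring
    rw [testErr, ht, hh]
    linarith [c0_le_PgtS hσ (le_refl (σ / 2))]
  have h2 : (σ / 2) ^ q = σ ^ q * (1 / 2) ^ q := by
    rw [← Real.mul_rpow hσ.le (by norm_num)]; ring_nf
  rw [h2]
  have h3 : 0 ≤ s * (σ ^ q * (1 / 2) ^ q) := by positivity
  nlinarith [mul_le_mul_of_nonneg_left h1 h3]

lemma psi_tStar_ge {σ : ℝ} {p s : ℕ} (hσ : 0 < σ) (hs : 1 ≤ s) (hsp : (s : ℝ) < p / 2) :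
    0 < tStar p s σ ∧ c0 * s ≤ psi p s σ (tStar p s σ) := by
  have hs0 : (0 : ℝ) < s := by exact_mod_cast hs
  have h2 : (2 : ℝ) < p / s := by rw [lt_div_iff₀ hs0]; linarith
  have hL : 0 < Real.log ((p : ℝ) / s - 1) := Real.log_pos (by linarith)
  have hpos : 0 < tStar p s σ := mul_pos hσ (Real.sqrt_pos.2 (by linarith))
  refine ⟨hpos, ?_⟩
  have hsq : tStar p s σ ^ 2 = 2 * (σ ^ 2 * Real.log ((p : ℝ) / s - 1)) := by
    rw [tStar, mul_pow, Real.sq_sqrt (by linarith)]; ring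
  have ht : tFun p s σ (tStar p s σ) = tStar p s σ := by
    have : σ ^ 2 * Real.log ((p : ℝ) / s - 1) = tStar p s σ ^ 2 / 2 := by linarith
    rw [tFun, this]
    field_simp
    ring
  rw [psi, ht, sub_self]
  have h3 := c0_le_PgtS hσ (show (0 : ℝ) ≤ σ / 2 by linarith)
  have h4 : 0 ≤ ((p : ℝ) - s) * PgtS σ (tStar p s σ) :=
    mul_nonneg (by linarith) (PgtS_nonneg _ _)
  nlinarith

/-- Proposition 4 (lower bound on the scaled minimax risk). -/
theorem stmt_4 (q : ℝ) (hq : 1 ≤ q) :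
    ∃ C : ℝ, 0 < C ∧ ∀ (σ a : ℝ) (s p : ℕ), 0 < σ → 0 < a → 1 ≤ s →
      (s : ℝ) < (p : ℝ) / 2 → 8 * q * Real.log (Real.log p) ≤ (s : ℝ) →
      ENNReal.ofReal (C * Phi p s σ q a) ≤ minimax p s σ q a := by
  set I := ∫ x, |x| ^ q ∂stdG with hI
  have hI0 : 0 ≤ I := integral_nonneg fun x => Real.rpow_nonneg (abs_nonneg x) q
  have hc := c0_pos
  set d : ℝ := (1 / 2) ^ q with hd
  have hd0 : 0 < d := by positivity
  refine ⟨min (d / 2) (min (d * c0 / (I + 1)) (d / 2 * c0)), by positivity, ?_⟩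
  intro σ a s p hσ ha hs hsp _
  set C := min (d / 2) (min (d * c0 / (I + 1)) (d / 2 * c0)) with hC
  have hC0 : 0 < C := by positivity
  have hs0 : (0 : ℝ) < s := by exact_mod_cast hs
  have hC1 : C ≤ d / 2 := min_le_left _ _
  have hC2 : C ≤ d * c0 / (I + 1) := (min_le_right _ _).trans (min_le_left _ _)
  have hC3 : C ≤ d / 2 * c0 := (min_le_right _ _).trans (min_le_right _ _)
  have hpsi0 : ∀ b, 0 ≤ psi p s σ b := fun b =>
    add_nonneg (mul_nonneg (by linarith) (PgtS_nonneg _ _))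
      (mul_nonneg hs0.le (PgtS_nonneg _ _))
  unfold Phi
  split_ifs with hta
  · rw [mul_max_of_nonneg _ _ hC0.le, ENNReal.ofReal_max]
    refine max_le (le_trans (ENNReal.ofReal_le_ofReal ?_) (psi_bound hq hσ ha hs hsp))
      (le_trans (ENNReal.ofReal_le_ofReal ?_) (noise_bound hq hσ (p := p) ?_))
    · exact mul_le_mul_of_nonneg_right hC1 (mul_nonneg (by positivity) (hpsi0 a))
    · rw [sigmaqq_eq hσ, ← hI]
      have h1 : C * I ≤ d * c0 := by
        rw [le_div_iff₀ (by positivity)] at hC2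
        nlinarith
      calc C * (σ ^ q * I * s) = C * I * (s * σ ^ q) := by ring
        _ ≤ _ := mul_le_mul_of_nonneg_right h1 (by positivity)
    · have : (s : ℝ) ≤ p := by linarith
      exact_mod_cast this
  · -- below `t*` the risk is at least the risk at `t*`, where `ψ` is of order `s`
    obtain ⟨ht0, hpsi⟩ := psi_tStar_ge hσ hs hsp
    refine le_trans (ENNReal.ofReal_le_ofReal ?_)
      ((psi_bound hq hσ ht0 hs hsp).trans (minimax_anti (not_le.1 hta).le))
    have h2 : (2 : ℝ) < p / s := by rw [lt_div_iff₀ hs0]; linarith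
    have hL : 0 < Real.log ((p : ℝ) / s - 1) := Real.log_pos (by linarith)
    have h3 : tStar p s σ ^ q = σ ^ q * (2 * Real.log ((p : ℝ) / s - 1)) ^ (q / 2) := by
      rw [tStar, Real.mul_rpow hσ.le (Real.sqrt_nonneg _), Real.sqrt_eq_rpow,
        ← Real.rpow_mul (by linarith)]
      ring_nf
    rw [mul_assoc (s : ℝ), ← h3, ← hd]
    have h4 : 0 ≤ tStar p s σ ^ q := by positivity
    calc C * (s * tStar p s σ ^ q) ≤ d / 2 * c0 * (s * tStar p s σ ^ q) := by gcongr
      _ = d / 2 * (tStar p s σ ^ q * (c0 * s)) := by ring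
      _ ≤ _ := by gcongr

end
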